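/- (A_ℓ Bailey Transform, first orthogonality relation.) Let ℓ ≥ 1, let q, a, x_1, …, x_ℓ be nonzero complex numbers such that every q-shifted factorial occurring in a denominator below is nonzero. For vectors i, j of nonnegative integers of length ℓ define M(i;j) := ∏_{r,s=1}^{ℓ} ((q x_r/x_s) q^{j_r−j_s}; q)_{i_r−j_r}^{−1} · ∏_{k=1}^{ℓ} (a q x_k/x_ℓ; q)_{i_k+(j_1+⋯+j_ℓ)}^{−1}, and M*(i;j) := ∏_{k=1}^{ℓ} [1 − a (x_k/x_ℓ) q^{i_k+(i_1+⋯+i_ℓ)}] · ∏_{k=1}^{ℓ} (a q x_k/x_ℓ; q)_{j_k+(i_1+⋯+i_ℓ)−1} · ∏_{r,s=1}^{ℓ} ((q x_r/x_s) q^{j_r−j_s}; q)_{i_r−j_r}^{−1} · (−1)^{|i|−|j|} q^{binom(|i|−|j|,2)}, where |i| = i_1+⋯+i_ℓ. Then for all vectors i, j of nonnegative integers of length ℓ, the sum over all vectors y with j_k ≤ y_k ≤ i_k for k = 1, …, ℓ of M(i;y)·M*(y;j) equals ∏_{k=1}^{ℓ} δ(i_k, j_k), where δ(r,s) = 1 if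 r = s and 0 otherwise (in particular the sum is empty and equals 0 unless j_k ≤ i_k for all k). -/

import Mathlib

set_option autoImplicit false
set_option maxHeartbeats 1000000

open Finset

/-- The `q`-shifted factorial `(a; q)_n`, extended to all integers `n` by the
standard convention `(a;q)_{-m} = 1 / ∏_{k=1}^{m} (1 - a q^{-k})`. -/
noncomputable def qp (a q : ℂ) (n : ℤ) : ℂ :=
  if 0 ≤ n then ∏ k ∈ Finset.range n.toNat, (1 - a * q ^ (k : ℤ))
  else (∏ k ∈ Finset.range (-n).toNat, (1 - a * q ^ (-(k : ℤ) - 1)))⁻¹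

/-- The `A_ℓ` Bailey transform matrix `M(i;j)`; `xl` denotes `x_ℓ`. -/
noncomputable def MA (ℓ : ℕ) (q a : ℂ) (x : Fin ℓ → ℂ) (xl : ℂ)
    (i j : Fin ℓ → ℕ) : ℂ :=
  (∏ r, ∏ s,
    (qp (q * (x r / x s) * q ^ ((j r : ℤ) - (j s : ℤ))) q ((i r : ℤ) - (j r : ℤ)))⁻¹) *
  ∏ k, (qp (a * q * (x k / xl)) q ((i k : ℤ) + ∑ s, (j s : ℤ)))⁻¹

/-- The `A_ℓ` Bailey transform matrix `M*(i;j)`; `xl` denotes `x_ℓ`. -/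
noncomputable def MAstar (ℓ : ℕ) (q a : ℂ) (x : Fin ℓ → ℂ) (xl : ℂ)
    (i j : Fin ℓ → ℕ) : ℂ :=
  (∏ k, (1 - a * (x k / xl) * q ^ ((i k : ℤ) + ∑ s, (i s : ℤ)))) *
  (∏ k, qp (a * q * (x k / xl)) q ((j k : ℤ) + (∑ s, (i s : ℤ)) - 1)) *
  (∏ r, ∏ s,
    (qp (q * (x r / x s) * q ^ ((j r : ℤ) - (j s : ℤ))) q ((i r : ℤ) - (j r : ℤ)))⁻¹) *
  (-1 : ℂ) ^ ((∑ s, (i s : ℤ)) - ∑ s, (j s : ℤ)) *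
  q ^ (((∑ s, (i s : ℤ)) - ∑ s, (j s : ℤ)) *
        ((∑ s, (i s : ℤ)) - (∑ s, (j s : ℤ)) - 1) / 2)

/-!
The matrices are lower triangular for the componentwise order, so it suffices to prove `M* M = 1`.
Fix `j < i` and consider the nodes `z(r, m) = x_r q ^ m` with `j_r ≤ m ≤ i_r`. Up to a factor
independent of `y`, the `y`-th term of `(M* M)(i; j)` is the Vandermonde determinant of the nodes
`z(s, y_s)` times `∏_s w(s, y_s) h(z(s, y_s))`, where `w` denotes the nodal weights (the inverse
products of differences to all other nodes) and `h` is a polynomial of degree at most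
`|i| - |j| - 1`. By multilinearity the sum over `y` is a determinant whose rows add up to zero,
because the divided difference of a polynomial of low degree vanishes.
-/

section Triangles

lemma choose_two_add (m n : ℕ) : (m + n).choose 2 = m.choose 2 + n.choose 2 + m * n := by
  rify
  simp only [Nat.cast_choose_two, Nat.cast_add]
  ring

lemma intCast_choose_two (n : ℕ) : (n.choose 2 : ℤ) = n * (n - 1) / 2 := by
  cases n <;> simp [Nat.choose_two_right]

variable {α M : Type*} [LinearOrder α] [Fintype α] [LocallyFiniteOrderTop α]
  [LocallyFiniteOrderBot α] [CommMonoid M]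

@[to_additive]
lemma prod_prod_eq_prod_diag_mul_prod_Ioi (f : α → α → M) :
    ∏ r, ∏ s, f r s = (∏ r, f r r) * ∏ r, ∏ s ∈ Ioi r, f r s * f s r := by
  rw [prod_prod_Ioi_mul_eq_prod_prod_off_diag fun s r ↦ f r s, ← prod_mul_distrib]
  exact prod_congr rfl fun r _ ↦ Fintype.prod_eq_mul_prod_compl r (f r)

lemma choose_two_sum (n : α → ℕ) :
    (∑ r, n r).choose 2 = ∑ r, (n r).choose 2 + ∑ r, ∑ s ∈ Ioi r, n r * n s := by
  have h_sq : (∑ r, (n r : ℝ)) * ∑ r, (n r : ℝ) =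
      ∑ r, (n r : ℝ) * n r + 2 * ∑ r, ∑ s ∈ Ioi r, (n r : ℝ) * n s := by
    rw [sum_mul_sum, sum_sum_eq_sum_diag_add_sum_Ioi]
    simp_rw [mul_sum]
    congr! 3
    ring
  rify
  simp only [Nat.cast_choose_two, Nat.cast_sum, ← sum_div, mul_sub, mul_one, sum_sub_distrib]
  linear_combination h_sq / 2

end Triangles

section Reindexing

lemma prod_Icc_erase {α M : Type*} [LinearOrder α] [LocallyFiniteOrder α] [CommMonoid M]
    {a b c : α} (hab : a ≤ b) (hbc : b ≤ c) (f : α → M) :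
    ∏ m ∈ (Icc a c).erase b, f m = (∏ m ∈ Ico a b, f m) * ∏ m ∈ Ioc b c, f m := by
  rw [← prod_union]
  · congr 1
    ext m
    grind
  · exact disjoint_left.2 fun m hm hm' ↦ (mem_Ico.1 hm).2.not_gt (mem_Ioc.1 hm').1

lemma prod_sigma_erase {ι M : Type*} {κ : ι → Type*} [Fintype ι] [DecidableEq ι]
    [∀ r, DecidableEq (κ r)] [CommMonoid M] {t : ∀ r, Finset (κ r)} {y : ∀ r, κ r}
    (hy : ∀ r, y r ∈ t r) (s : ι) (f : (Σ r, κ r) → M) :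
    ∏ p ∈ (univ.sigma t).erase ⟨s, y s⟩, f p =
      (∏ r, ∏ m ∈ (t r).erase (y r), f ⟨r, m⟩) * ∏ r ∈ {s}ᶜ, f ⟨r, y r⟩ := by
  have h_erase : (univ.sigma t).erase ⟨s, y s⟩ =
      univ.sigma (Function.update t s ((t s).erase (y s))) := by
    ext ⟨r, m⟩
    by_cases h : r = s
    · subst h; simp
    · simp [h]
  rw [h_erase, prod_sigma, Fintype.prod_eq_mul_prod_compl s, Fintype.prod_eq_mul_prod_compl s
    (fun r ↦ ∏ m ∈ (t r).erase (y r), f ⟨r, m⟩), mul_assoc, ← prod_mul_distrib,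
    Function.update_self]
  congr 1
  refine prod_congr rfl fun r hr ↦ ?_
  rw [Function.update_of_ne (by simpa using hr), prod_erase_mul _ _ (hy r)]

end Reindexing

section Vandermonde

open Matrix Polynomial

variable {R K : Type*} [CommRing R] [Field K] {ℓ : ℕ}

lemma prod_prod_compl_sub_eq_det_vandermonde_sq (z : Fin ℓ → R) :
    ∏ s, ∏ r ∈ {s}ᶜ, (z s - z r) = (-1) ^ ℓ.choose 2 * (vandermonde z).det ^ 2 := by
  have h_card : ∑ r : Fin ℓ, #(Ioi r) = ℓ.choose 2 := by
    simp_rw [Fin.card_Ioi]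
    rw [Fin.sum_univ_eq_sum_range fun r ↦ ℓ - 1 - r, sum_range_reflect fun r ↦ r, sum_range_id,
      Nat.choose_two_right]
  rw [← prod_prod_Ioi_mul_eq_prod_prod_off_diag fun r s ↦ z s - z r, det_vandermonde, ← h_card,
    ← prod_pow_eq_pow_sum]
  simp_rw [← prod_const, ← prod_pow, ← prod_mul_distrib]
  exact prod_congr rfl fun r _ ↦ prod_congr rfl fun s _ ↦ by ring

lemma det_sum_mul_pow {κ : Type*} (t : Fin ℓ → Finset κ) (g v : Fin ℓ → κ → R) :
    (of fun r p : Fin ℓ ↦ ∑ m ∈ t r, g r m * v r m ^ (p : ℕ)).det =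
      ∑ n ∈ Fintype.piFinset t, (vandermonde fun r ↦ v r (n r)).det * ∏ r, g r (n r) := by
  have h_rows : (of fun r p : Fin ℓ ↦ ∑ m ∈ t r, g r m * v r m ^ (p : ℕ)) =
      fun r ↦ ∑ m ∈ t r, fun p : Fin ℓ ↦ g r m * v r m ^ (p : ℕ) := by
    ext r p
    simp
  rw [h_rows]
  refine (detRowAlternating.toMultilinearMap.map_sum_finset
    (fun r m (p : Fin ℓ) ↦ g r m * v r m ^ (p : ℕ)) t).trans (sum_congr rfl fun n _ ↦ ?_)
  rw [mul_comm]
  exact det_mul_column (fun r ↦ g r (n r)) (vandermonde fun r ↦ v r (n r))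

lemma sum_nodalWeight_mul_eval_eq_zero {ι : Type*} [DecidableEq ι] {S : Finset ι} {v : ι → K}
    (hv : Set.InjOn v S) {P : K[X]} (hP : P.natDegree + 1 < #S) :
    ∑ i ∈ S, Lagrange.nodalWeight S v i * P.eval (v i) = 0 := by
  have h_deg : P.degree < #S := by
    refine degree_le_natDegree.trans_lt ?_
    exact_mod_cast (Nat.lt_succ_self _).trans hP
  have h_coeff := Lagrange.coeff_eq_sum hv h_deg
  rw [coeff_eq_zero_of_natDegree_lt (by omega)] at h_coeff
  rw [h_coeff]
  exact sum_congr rfl fun i _ ↦ by rw [Lagrange.nodalWeight, prod_inv_distrib, inv_mul_eq_div]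

-- The sum expands a determinant whose rows add up to zero: the column sums are the divided
-- differences of `h`, `h * X`, ..., `h * X ^ (ℓ - 1)` over all nodes.
lemma sum_det_vandermonde_mul_nodalWeight_eq_zero {κ : Type*} [DecidableEq κ]
    {t : Fin ℓ → Finset κ} {v : (Σ _ : Fin ℓ, κ) → K} (hv : Set.InjOn v (univ.sigma t)) {h : K[X]}
    (hh : h.natDegree + ℓ < #(univ.sigma t)) :
    ∑ y ∈ Fintype.piFinset t, (vandermonde fun r ↦ v ⟨r, y r⟩).det *
      ∏ r, Lagrange.nodalWeight (univ.sigma t) v ⟨r, y r⟩ * h.eval (v ⟨r, y r⟩) = 0 := by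
  obtain ⟨⟨r₀, _⟩, _⟩ : (univ.sigma t).Nonempty := card_pos.1 (by omega)
  rw [← det_sum_mul_pow t
    (fun r m ↦ Lagrange.nodalWeight (univ.sigma t) v ⟨r, m⟩ * h.eval (v ⟨r, m⟩)) fun r m ↦ v ⟨r, m⟩,
    ← exists_vecMul_eq_zero_iff]
  refine ⟨1, fun h_one ↦ one_ne_zero (congrFun h_one r₀), funext fun p ↦ ?_⟩
  have h_deg : (h * X ^ (p : ℕ)).natDegree + 1 < #(univ.sigma t) := by
    have := natDegree_mul_le (p := h) (q := X ^ (p : ℕ))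
    rw [natDegree_X_pow] at this
    omega
  simpa [vecMul, dotProduct, sum_sigma, mul_assoc] using sum_nodalWeight_mul_eval_eq_zero hv h_deg

lemma prod_nodalWeight_section {κ : Type*} [DecidableEq κ] {t : Fin ℓ → Finset κ}
    {y : Fin ℓ → κ} (hy : ∀ r, y r ∈ t r) (v : (Σ _ : Fin ℓ, κ) → K) :
    ∏ s, Lagrange.nodalWeight (univ.sigma t) v ⟨s, y s⟩ =
      ((∏ r, ∏ s, ∏ m ∈ (t r).erase (y r), (v ⟨s, y s⟩ - v ⟨r, m⟩)) *
        ((-1) ^ ℓ.choose 2 * (vandermonde fun r ↦ v ⟨r, y r⟩).det ^ 2))⁻¹ := by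
  simp_rw [Lagrange.nodalWeight, prod_inv_distrib, prod_sigma_erase hy, prod_mul_distrib,
    prod_prod_compl_sub_eq_det_vandermonde_sq fun r ↦ v ⟨r, y r⟩]
  rw [prod_comm]

end Vandermonde

section Nodes

open Matrix

variable {R K : Type*} [CommRing R] [Field K] {ℓ : ℕ}

lemma prod_Ico_succ_mul_sub (q X Y : R) {a b : ℕ} (hab : a ≤ b) :
    ∏ m ∈ Ico a (b + 1), (Y * q - X * q ^ m) =
      (Y * q - X * q ^ a) * q ^ (b - a) * ∏ m ∈ Ico a b, (Y - X * q ^ m) := by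
  rw [prod_Ico_eq_prod_range, prod_Ico_eq_prod_range, Nat.succ_sub hab, prod_range_succ',
    mul_comm, add_zero, pow_eq_prod_const q (b - a), mul_assoc, ← prod_mul_distrib]
  congr 1
  exact prod_congr rfl fun m _ ↦ by ring

lemma prod_Ioc_sub_diag (q X : R) {a b : ℕ} (hab : a ≤ b) :
    (∏ m ∈ Ioc a b, (X * q ^ a - X * q ^ m)) * ((-1) ^ (b - a) * q ^ (b - a).choose 2) =
      ∏ m ∈ Ico a b, (X * q ^ b - X * q ^ m) := by
  induction b, hab using Nat.le_induction with
  | base => simp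
  | succ b hab ih =>
    have h_shift := prod_Ico_succ_mul_sub q X (X * q ^ b) hab
    simp only [mul_assoc X, ← pow_succ] at h_shift ⊢
    rw [h_shift, prod_Ioc_succ_top hab, Nat.sub_add_comm hab, choose_two_add]
    rw [← ih, Nat.choose_succ_self, add_zero, mul_one]
    ring

lemma prod_Ioc_sub_pair (q X Y : R) {a b c d : ℕ} (hab : a ≤ b) (hcd : c ≤ d) :
    (∏ m ∈ Ioc a b, (Y * q ^ c - X * q ^ m)) * (∏ m ∈ Ioc c d, (X * q ^ a - Y * q ^ m)) *
        (Y * q ^ c - X * q ^ a) * q ^ ((b - a) * (d - c)) =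
      (∏ m ∈ Ico a b, (Y * q ^ d - X * q ^ m)) * (∏ m ∈ Ico c d, (X * q ^ b - Y * q ^ m)) *
        (Y * q ^ d - X * q ^ b) := by
  induction d, hcd using Nat.le_induction with
  | base =>
    have h_ends := (prod_Ioc_mul_eq_prod_Icc (f := fun m ↦ Y * q ^ c - X * q ^ m) hab).trans
      (prod_Ico_mul_eq_prod_Icc hab).symm
    simpa using h_ends
  | succ d hcd ih =>
    have h_shift := prod_Ico_succ_mul_sub q X (Y * q ^ d) hab
    rw [prod_Ico_succ_top hab, mul_assoc Y, ← pow_succ] at h_shift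
    rw [prod_Ioc_succ_top hcd, prod_Ico_succ_top hcd, Nat.succ_sub hcd, Nat.mul_succ,
      pow_add q ((b - a) * (d - c))]
    linear_combination (X * q ^ a - Y * q ^ (d + 1)) * q ^ (b - a) * ih -
      (∏ m ∈ Ico c d, (X * q ^ b - Y * q ^ m)) * (X * q ^ b - Y * q ^ d) * h_shift

/-- The geometric nodes `x_r q ^ m`. -/
def node (q : R) (x : Fin ℓ → R) (p : Σ _ : Fin ℓ, ℕ) : R := x p.1 * q ^ p.2

/-- The product of all differences `x_s q ^ y_s - x_r q ^ m` with `m ∈ I r`. For `y = j` and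
`I r = Ioc (j r) (i r)` it is the double product of `q`-shifted factorials in `M(i; j)`, with the
divisions by `x_s q ^ j_s` cleared. -/
def sectionProd (q : R) (x : Fin ℓ → R) (I : Fin ℓ → Finset ℕ) (y : Fin ℓ → ℕ) : R :=
  ∏ r, ∏ s, ∏ m ∈ I r, (node q x ⟨s, y s⟩ - node q x ⟨r, m⟩)

/-- The Vandermonde determinant of the nodes `x_r q ^ y_r`. -/
def sectionDet (q : R) (x : Fin ℓ → R) (y : Fin ℓ → ℕ) : R :=
  (vandermonde fun r ↦ node q x ⟨r, y r⟩).det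

lemma sectionProd_Ioc_mul_sectionDet (q : R) (x : Fin ℓ → R) {j y : Fin ℓ → ℕ} (hjy : j ≤ y) :
    sectionProd q x (fun r ↦ Ioc (j r) (y r)) j * sectionDet q x j *
        ((-1) ^ (∑ r, y r - ∑ r, j r) * q ^ (∑ r, y r - ∑ r, j r).choose 2) =
      sectionProd q x (fun r ↦ Ico (j r) (y r)) y * sectionDet q x y := by
  have h_diag : (∏ r, ∏ m ∈ Ioc (j r) (y r), (node q x ⟨r, j r⟩ - node q x ⟨r, m⟩)) *
      ((-1) ^ (∑ r, (y r - j r)) * q ^ ∑ r, (y r - j r).choose 2) =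
      ∏ r, ∏ m ∈ Ico (j r) (y r), (node q x ⟨r, y r⟩ - node q x ⟨r, m⟩) := by
    simp_rw [← prod_pow_eq_pow_sum, ← prod_mul_distrib]
    exact prod_congr rfl fun r _ ↦ prod_Ioc_sub_diag q (x r) (hjy r)
  have h_pairs : (∏ r, ∏ s ∈ Ioi r,
        (∏ m ∈ Ioc (j r) (y r), (node q x ⟨s, j s⟩ - node q x ⟨r, m⟩)) *
          ∏ m ∈ Ioc (j s) (y s), (node q x ⟨r, j r⟩ - node q x ⟨s, m⟩)) *
        sectionDet q x j * q ^ ∑ r, ∑ s ∈ Ioi r, (y r - j r) * (y s - j s) =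
      (∏ r, ∏ s ∈ Ioi r,
        (∏ m ∈ Ico (j r) (y r), (node q x ⟨s, y s⟩ - node q x ⟨r, m⟩)) *
          ∏ m ∈ Ico (j s) (y s), (node q x ⟨r, y r⟩ - node q x ⟨s, m⟩)) * sectionDet q x y := by
    simp_rw [sectionDet, det_vandermonde, ← prod_pow_eq_pow_sum, ← prod_mul_distrib]
    exact prod_congr rfl fun r _ ↦ prod_congr rfl fun s _ ↦
      prod_Ioc_sub_pair q (x r) (x s) (hjy r) (hjy s)
  rw [sectionProd, sectionProd, prod_prod_eq_prod_diag_mul_prod_Ioi,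
    prod_prod_eq_prod_diag_mul_prod_Ioi, ← sum_tsub_distrib _ fun r _ ↦ hjy r, choose_two_sum,
    pow_add, ← h_diag]
  linear_combination (∏ r, ∏ m ∈ Ioc (j r) (y r), (node q x ⟨r, j r⟩ - node q x ⟨r, m⟩)) *
    ((-1) ^ (∑ r, (y r - j r)) * q ^ ∑ r, (y r - j r).choose 2) * h_pairs

lemma prod_node_mul_pow (q : R) (x : Fin ℓ → R) {j y : Fin ℓ → ℕ} (hjy : j ≤ y) :
    (∏ s, node q x ⟨s, j s⟩) * q ^ (∑ r, y r - ∑ r, j r) = ∏ s, node q x ⟨s, y s⟩ := by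
  rw [← sum_tsub_distrib _ fun r _ ↦ hjy r, ← prod_pow_eq_pow_sum, ← prod_mul_distrib]
  refine prod_congr rfl fun r _ ↦ ?_
  rw [node, node, mul_assoc, ← pow_add, Nat.add_sub_cancel' (hjy r)]

lemma sectionDet_ne_zero {q : K} {x : Fin ℓ → K} (h_inj : Function.Injective (node q x))
    (y : Fin ℓ → ℕ) : sectionDet q x y ≠ 0 :=
  det_vandermonde_ne_zero_iff.2 fun _ _ h ↦ congrArg Sigma.fst (h_inj h)

/-- The indices `(r, m)`, `j_r ≤ m ≤ i_r`, of the nodes over the box `[j, i]`. -/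
def boxIndices (j i : Fin ℓ → ℕ) : Finset (Σ _ : Fin ℓ, ℕ) :=
  univ.sigma fun r ↦ Icc (j r) (i r)

lemma card_boxIndices {j i : Fin ℓ → ℕ} (hji : j ≤ i) :
    #(boxIndices j i) = ∑ r, i r - ∑ r, j r + ℓ := by
  rw [boxIndices, card_sigma, ← sum_tsub_distrib _ fun r _ ↦ hji r]
  simp [Nat.sub_add_comm (hji _), sum_add_distrib]

lemma prod_nodalWeight_node (q : K) (x : Fin ℓ → K) {i y j : Fin ℓ → ℕ} (hjy : j ≤ y)
    (hyi : y ≤ i) :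
    ∏ s, Lagrange.nodalWeight (boxIndices j i) (node q x) ⟨s, y s⟩ =
      (sectionProd q x (fun r ↦ Ico (j r) (y r)) y * sectionProd q x (fun r ↦ Ioc (y r) (i r)) y *
        ((-1) ^ ℓ.choose 2 * sectionDet q x y ^ 2))⁻¹ := by
  rw [boxIndices, prod_nodalWeight_section fun r ↦ mem_Icc.2 ⟨hjy r, hyi r⟩]
  simp_rw [prod_Icc_erase (hjy _) (hyi _), prod_mul_distrib]
  rfl

/-- The factor independent of `y` when the double products in `M*(i; y) M(y; j)` are expressed
through nodal weights, as in `pow_div_sectionProd_mul_pow_div_sectionProd`. -/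
def boxConst (q : K) (x : Fin ℓ → K) (j i : Fin ℓ → ℕ) : K :=
  (-1) ^ ℓ.choose 2 * (∏ s, node q x ⟨s, j s⟩) ^ (∑ r, i r - ∑ r, j r) * sectionDet q x j *
    ((-1) ^ (∑ r, i r - ∑ r, j r) * q ^ (∑ r, i r - ∑ r, j r).choose 2)

lemma pow_div_sectionProd_mul_pow_div_sectionProd {q : K} (hq : q ≠ 0) {x : Fin ℓ → K}
    (h_inj : Function.Injective (node q x)) {i y j : Fin ℓ → ℕ} (hjy : j ≤ y) (hyi : y ≤ i) :
    ((∏ s, node q x ⟨s, y s⟩) ^ (∑ r, i r - ∑ r, y r) /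
        sectionProd q x (fun r ↦ Ioc (y r) (i r)) y) *
      ((∏ s, node q x ⟨s, j s⟩) ^ (∑ r, y r - ∑ r, j r) /
        sectionProd q x (fun r ↦ Ioc (j r) (y r)) j) *
      ((-1) ^ (∑ r, i r - ∑ r, y r) * q ^ (∑ r, i r - ∑ r, y r).choose 2) =
    boxConst q x j i * (sectionDet q x y *
      ∏ s, Lagrange.nodalWeight (boxIndices j i) (node q x) ⟨s, y s⟩) := by
  have h_split : ∑ r, i r - ∑ r, j r = (∑ r, y r - ∑ r, j r) + (∑ r, i r - ∑ r, y r) := by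
    have := sum_le_sum fun r (_ : r ∈ univ) ↦ hjy r
    have := sum_le_sum fun r (_ : r ∈ univ) ↦ hyi r
    omega
  have h_swap : (sectionProd q x (fun r ↦ Ico (j r) (y r)) y * sectionDet q x y)⁻¹ =
      (sectionProd q x (fun r ↦ Ioc (j r) (y r)) j * sectionDet q x j *
        ((-1) ^ (∑ r, y r - ∑ r, j r) * q ^ (∑ r, y r - ∑ r, j r).choose 2))⁻¹ := by
    rw [sectionProd_Ioc_mul_sectionDet q x hjy]
  have hj := sectionDet_ne_zero h_inj j
  have hy := sectionDet_ne_zero h_inj y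
  rw [prod_nodalWeight_node q x hjy hyi, boxConst, h_split, choose_two_add,
    ← prod_node_mul_pow q x hjy]
  generalize ∑ r, y r - ∑ r, j r = u at *
  generalize ∑ r, i r - ∑ r, y r = w at *
  generalize sectionProd q x (fun r ↦ Ioc (y r) (i r)) y = U at *
  generalize sectionProd q x (fun r ↦ Ioc (j r) (y r)) j = A at *
  generalize sectionProd q x (fun r ↦ Ico (j r) (y r)) y = B at *
  have h_weights : sectionDet q x y * (B * U * ((-1) ^ ℓ.choose 2 * sectionDet q x y ^ 2))⁻¹ =
      (B * sectionDet q x y)⁻¹ * U⁻¹ * ((-1) ^ ℓ.choose 2)⁻¹ := by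
    field_simp
  rw [h_weights, h_swap]
  field_simp
  ring

end Nodes

section ShiftedFactorial

open Polynomial

lemma qp_natCast (a q : ℂ) (n : ℕ) : qp a q n = ∏ k ∈ range n, (1 - a * q ^ k) := by
  simp [qp]

lemma qp_zero (a q : ℂ) : qp a q 0 = 1 := by
  simp [qp]

/-- The polynomial `(c q ^ (m + 1) X; q)_{n - m - 1}`. -/
noncomputable def qpPolynomial (q c : ℂ) (m n : ℕ) : ℂ[X] :=
  ∏ t ∈ Ioo m n, (1 - C (c * q ^ t) * X)

lemma natDegree_qpPolynomial_le (q c : ℂ) (m n : ℕ) :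
    (qpPolynomial q c m n).natDegree ≤ n - m - 1 := by
  rw [← Nat.card_Ioo, card_eq_sum_ones]
  refine (natDegree_prod_le _ _).trans (sum_le_sum fun t _ ↦ ?_)
  compute_degree

lemma qp_mul_eval_qpPolynomial (q c z : ℂ) (u : ℕ) {m n : ℕ} (hmn : m < n) :
    qp (c * z * q) q ((u : ℤ) + m) * (qpPolynomial q c m n).eval (z * q ^ u) =
      qp (c * z * q) q ((u : ℤ) + n - 1) := by
  have h_length : (u : ℤ) + n - 1 = (u + m + (n - (m + 1)) : ℕ) := by omega
  rw [h_length, qp_natCast, prod_range_add, ← Nat.cast_add, qp_natCast, qpPolynomial, eval_prod,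
    ← Finset.Ico_add_one_left_eq_Ioo, prod_Ico_eq_prod_range]
  congr 1
  refine prod_congr rfl fun t _ ↦ ?_
  simp
  ring

lemma qp_div_mul_zpow {q b c : ℂ} (hq : q ≠ 0) (hc : c ≠ 0) {u n : ℕ} (hun : u ≤ n) (v : ℕ) :
    qp (q * (b / c) * q ^ ((u : ℤ) - v)) q ((n : ℤ) - u) =
      (∏ m ∈ Ioc u n, (c * q ^ v - b * q ^ m)) / (c * q ^ v) ^ (n - u) := by
  rw [← Nat.cast_sub hun, qp_natCast, ← Finset.Ico_add_one_add_one_eq_Ioc, prod_Ico_eq_prod_range,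
    Nat.add_sub_add_right, pow_eq_prod_const _ (n - u), ← prod_div_distrib]
  refine prod_congr rfl fun k _ ↦ ?_
  rw [zpow_sub₀ hq, zpow_natCast, zpow_natCast]
  field_simp
  ring

variable {ℓ : ℕ} {q : ℂ} {x : Fin ℓ → ℂ}

lemma prod_prod_qp_inv (hq : q ≠ 0) (hx : ∀ k, x k ≠ 0) {j i : Fin ℓ → ℕ} (hji : j ≤ i) :
    ∏ r, ∏ s, (qp (q * (x r / x s) * q ^ ((j r : ℤ) - j s)) q ((i r : ℤ) - j r))⁻¹ =
      (∏ s, node q x ⟨s, j s⟩) ^ (∑ r, i r - ∑ r, j r) /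
        sectionProd q x (fun r ↦ Ioc (j r) (i r)) j := by
  simp_rw [qp_div_mul_zpow hq (hx _) (hji _), inv_div, prod_div_distrib, prod_pow]
  rw [prod_pow_eq_pow_sum, sum_tsub_distrib _ fun r _ ↦ hji r]
  rfl

lemma node_injective (hq : q ≠ 0) (hx : ∀ k, x k ≠ 0)
    (hd : ∀ i j : Fin ℓ → ℕ, (∀ k, j k ≤ i k) → ∀ r s : Fin ℓ,
      qp (q * (x r / x s) * q ^ ((j r : ℤ) - (j s : ℤ))) q ((i r : ℤ) - (j r : ℤ)) ≠ 0) :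
    Function.Injective (node q x) := by
  have h_ne (j : Fin ℓ → ℕ) {r s : Fin ℓ} {m : ℕ} (hm : j r < m) :
      x s * q ^ j s ≠ x r * q ^ m := by
    intro h
    have hjm : j ≤ j ⊔ fun _ ↦ m := le_sup_left
    have hm_mem : m ∈ Ioc (j r) ((j ⊔ fun _ ↦ m) r) := mem_Ioc.2 ⟨hm, le_sup_right⟩
    apply hd _ j hjm r s
    rw [qp_div_mul_zpow hq (hx s) (hjm r), prod_eq_zero hm_mem (sub_eq_zero.2 h), zero_div]
  rintro ⟨s, v⟩ ⟨r, m⟩ (h : x s * q ^ v = x r * q ^ m)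
  obtain rfl | hsr := eq_or_ne s r
  · obtain hlt | rfl | hlt := lt_trichotomy v m
    · exact absurd h (h_ne (fun _ ↦ v) hlt)
    · rfl
    · exact absurd h.symm (h_ne (fun _ ↦ m) hlt)
  · refine absurd ?_ (h_ne (Function.update (fun _ ↦ v + 1) r m) (r := r) (s := s)
      (m := m + 1) (by simp))
    rw [Function.update_of_ne hsr, pow_succ, pow_succ, ← mul_assoc, ← mul_assoc, h]

end ShiftedFactorial

section Triangular

open Matrix

variable {α R : Type*} [PartialOrder α] [LocallyFiniteOrder α] [CommRing R]

open Classical in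
/-- The lower triangular matrix with entries `f u v`, `v ≤ u`, on the interval `[a, b]`. -/
noncomputable def triangularMatrix (a b : α) (f : α → α → R) : Matrix (Icc a b) (Icc a b) R :=
  of fun u v ↦ if v.1 ≤ u.1 then f u v else 0

lemma triangularMatrix_mul_apply {a b : α} (f g : α → α → R) (u v : Icc a b) :
    (triangularMatrix a b f * triangularMatrix a b g) u v =
      ∑ y ∈ Icc v.1 u.1, f u y * g y v := by
  classical
  have h_sub : Icc v.1 u.1 ⊆ Icc a b :=
    Icc_subset_Icc (mem_Icc.1 v.2).1 (mem_Icc.1 u.2).2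
  simp only [triangularMatrix, mul_apply, of_apply]
  rw [sum_coe_sort (Icc a b) fun y ↦ (if y ≤ u.1 then f u y else 0) * if v.1 ≤ y then g y v else 0,
    ← sum_subset h_sub]
  · refine sum_congr rfl fun y hy ↦ ?_
    rw [if_pos (mem_Icc.1 hy).2, if_pos (mem_Icc.1 hy).1]
  · intro y _ hy
    rw [mem_Icc] at hy
    rw [ite_zero_mul_ite_zero, if_neg (hy ∘ And.symm)]

lemma sum_Icc_mul_eq_ite_of_swap [DecidableEq α] {f g : α → α → R}
    (h : ∀ a b, a ≤ b → ∑ y ∈ Icc a b, f b y * g y a = if b = a then 1 else 0) (a b : α) :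
    ∑ y ∈ Icc a b, g b y * f y a = if b = a then 1 else 0 := by
  by_cases hab : a ≤ b
  · have h_mul : triangularMatrix a b f * triangularMatrix a b g = 1 := by
      ext u v
      rw [triangularMatrix_mul_apply, one_apply]
      by_cases hvu : v.1 ≤ u.1
      · simp_rw [h _ _ hvu, Subtype.ext_iff]
      · rw [Icc_eq_empty hvu, sum_empty, if_neg fun huv ↦ hvu (congrArg Subtype.val huv).ge]
    have h_swap : triangularMatrix a b g * triangularMatrix a b f = 1 := mul_eq_one_comm.1 h_mul
    have h_entry := congrFun₂ h_swap ⟨b, right_mem_Icc.2 hab⟩ ⟨a, left_mem_Icc.2 hab⟩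
    simpa [triangularMatrix_mul_apply, one_apply] using h_entry
  · rw [Icc_eq_empty hab, sum_empty, if_neg fun hba ↦ hab hba.ge]

end Triangular

section BaileyMatrices

variable {ℓ : ℕ} {q : ℂ} {x : Fin ℓ → ℂ}

lemma MA_eq (hq : q ≠ 0) (hx : ∀ k, x k ≠ 0) (a xl : ℂ) {j i : Fin ℓ → ℕ} (hji : j ≤ i) :
    MA ℓ q a x xl i j =
      (∏ s, node q x ⟨s, j s⟩) ^ (∑ r, i r - ∑ r, j r) /
          sectionProd q x (fun r ↦ Ioc (j r) (i r)) j *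
        ∏ k, (qp (a * q * (x k / xl)) q ((i k : ℤ) + ∑ s, (j s : ℤ)))⁻¹ := by
  rw [MA, prod_prod_qp_inv hq hx hji]

lemma MAstar_eq (hq : q ≠ 0) (hx : ∀ k, x k ≠ 0) (a xl : ℂ) {j i : Fin ℓ → ℕ} (hji : j ≤ i) :
    MAstar ℓ q a x xl i j =
      (∏ k, (1 - a * (x k / xl) * q ^ (i k + ∑ s, i s))) *
        (∏ k, qp (a * q * (x k / xl)) q ((j k : ℤ) + (∑ s, (i s : ℤ)) - 1)) *
        ((∏ s, node q x ⟨s, j s⟩) ^ (∑ r, i r - ∑ r, j r) /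
          sectionProd q x (fun r ↦ Ioc (j r) (i r)) j *
        ((-1) ^ (∑ r, i r - ∑ r, j r) * q ^ (∑ r, i r - ∑ r, j r).choose 2)) := by
  have h_sub : (∑ s, (i s : ℤ)) - ∑ s, (j s : ℤ) = (∑ r, i r - ∑ r, j r : ℕ) := by
    rw [Nat.cast_sub (sum_le_sum fun r _ ↦ hji r), Nat.cast_sum, Nat.cast_sum]
  rw [MAstar, prod_prod_qp_inv hq hx hji, h_sub, ← intCast_choose_two, zpow_natCast, zpow_natCast]
  simp only [← Nat.cast_sum, ← Nat.cast_add, zpow_natCast, mul_assoc]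

lemma MAstar_mul_MA (hq : q ≠ 0) (hx : ∀ k, x k ≠ 0) (h_inj : Function.Injective (node q x))
    {a xl : ℂ} {i y j : Fin ℓ → ℕ} (hjy : j ≤ y) (hyi : y ≤ i) (hji : ∑ r, j r < ∑ r, i r)
    (hd : ∀ k, qp (a * q * (x k / xl)) q ((y k : ℤ) + ∑ s, (j s : ℤ)) ≠ 0) :
    MAstar ℓ q a x xl i y * MA ℓ q a x xl y j =
      (∏ k, (1 - a * (x k / xl) * q ^ (i k + ∑ s, i s))) * boxConst q x j i *
        (sectionDet q x y * ∏ s, Lagrange.nodalWeight (boxIndices j i) (node q x) ⟨s, y s⟩ *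
          (qpPolynomial q (a / xl) (∑ r, j r) (∑ r, i r)).eval (node q x ⟨s, y s⟩)) := by
  have h_eval : (∏ k, qp (a * q * (x k / xl)) q ((y k : ℤ) + (∑ s, (i s : ℤ)) - 1)) *
      ∏ k, (qp (a * q * (x k / xl)) q ((y k : ℤ) + ∑ s, (j s : ℤ)))⁻¹ =
      ∏ s, (qpPolynomial q (a / xl) (∑ r, j r) (∑ r, i r)).eval (node q x ⟨s, y s⟩) := by
    rw [← prod_mul_distrib]
    refine prod_congr rfl fun k _ ↦ (mul_inv_eq_iff_eq_mul₀ (hd k)).2 ?_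
    have h_base : a * q * (x k / xl) = a / xl * x k * q := by ring
    rw [h_base, ← Nat.cast_sum, ← Nat.cast_sum, ← qp_mul_eval_qpPolynomial q _ _ _ hji, mul_comm]
    rfl
  rw [MAstar_eq hq hx a xl hyi, MA_eq hq hx a xl hjy, prod_mul_distrib, ← h_eval]
  linear_combination (∏ k, (1 - a * (x k / xl) * q ^ (i k + ∑ s, i s))) *
    ((∏ k, qp (a * q * (x k / xl)) q ((y k : ℤ) + (∑ s, (i s : ℤ)) - 1)) *
      ∏ k, (qp (a * q * (x k / xl)) q ((y k : ℤ) + ∑ s, (j s : ℤ)))⁻¹) *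
    pow_div_sectionProd_mul_pow_div_sectionProd hq h_inj hjy hyi

lemma sum_MAstar_mul_MA_eq_zero (hq : q ≠ 0) (hx : ∀ k, x k ≠ 0)
    (h_inj : Function.Injective (node q x)) {a xl : ℂ} {j i : Fin ℓ → ℕ} (hji : j < i)
    (hd : ∀ y, j ≤ y → ∀ k, qp (a * q * (x k / xl)) q ((y k : ℤ) + ∑ s, (j s : ℤ)) ≠ 0) :
    ∑ y ∈ Icc j i, MAstar ℓ q a x xl i y * MA ℓ q a x xl y j = 0 := by
  have h_lt : ∑ r, j r < ∑ r, i r := Fintype.sum_strictMono hji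
  have h_deg : (qpPolynomial q (a / xl) (∑ r, j r) (∑ r, i r)).natDegree + ℓ <
      #(boxIndices j i) := by
    have := natDegree_qpPolynomial_le q (a / xl) (∑ r, j r) (∑ r, i r)
    rw [card_boxIndices hji.le]
    omega
  rw [sum_congr rfl fun y hy ↦ MAstar_mul_MA hq hx h_inj (mem_Icc.1 hy).1 (mem_Icc.1 hy).2 h_lt
    (hd y (mem_Icc.1 hy).1), ← mul_sum, Pi.Icc_eq]
  exact mul_eq_zero_of_right _ (sum_det_vandermonde_mul_nodalWeight_eq_zero h_inj.injOn h_deg)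

lemma MAstar_self_mul_MA_self (hq : q ≠ 0) {a xl : ℂ} (i : Fin ℓ → ℕ)
    (hd : ∀ k, qp (a * q * (x k / xl)) q ((i k : ℤ) + ∑ s, (i s : ℤ)) ≠ 0)
    (hd₀ : ∀ k, 1 - a * (x k / xl) ≠ 0) :
    MAstar ℓ q a x xl i i * MA ℓ q a x xl i i = 1 := by
  simp only [MAstar, MA, sub_self, qp_zero, inv_one, prod_const_one, mul_one, zpow_zero, one_mul,
    zero_mul, EuclideanDomain.zero_div, ← prod_mul_distrib]
  refine prod_eq_one fun k _ ↦ (mul_inv_eq_one₀ (hd k)).2 ?_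
  rw [← Nat.cast_sum, ← Nat.cast_add]
  obtain _ | n := i k + ∑ s, i s
  · -- `(b q; q)_{-1} = (1 - b)⁻¹`
    have h_base : a * q * (x k / xl) * q⁻¹ = a * (x k / xl) := by field_simp
    simp [qp, h_base, hd₀ k]
  · rw [Nat.cast_succ, add_sub_cancel_right, ← Nat.cast_succ, qp_natCast, qp_natCast,
      prod_range_succ, zpow_natCast, Nat.succ_eq_add_one]
    ring

end BaileyMatrices

/-- **A_ℓ Bailey Transform, first orthogonality relation.**
For generic parameters, `∑_{j ≤ y ≤ i} M(i;y) M*(y;j) = ∏_k δ(i_k, j_k)`. -/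
theorem Al_bailey_transform_first (ℓ : ℕ) (hℓ : 1 ≤ ℓ) (q a : ℂ)
    (hq : q ≠ 0) (ha : a ≠ 0) (x : Fin ℓ → ℂ) (hx : ∀ k, x k ≠ 0)
    (xl : ℂ) (hxl : xl = x ⟨ℓ - 1, by omega⟩)
    (hd1 : ∀ i j : Fin ℓ → ℕ, (∀ k, j k ≤ i k) → ∀ r s : Fin ℓ,
      qp (q * (x r / x s) * q ^ ((j r : ℤ) - (j s : ℤ))) q ((i r : ℤ) - (j r : ℤ)) ≠ 0)
    (hd2 : ∀ i j : Fin ℓ → ℕ, (∀ k, j k ≤ i k) → ∀ k : Fin ℓ,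
      qp (a * q * (x k / xl)) q ((i k : ℤ) + ∑ s, (j s : ℤ)) ≠ 0)
    (hd3 : ∀ k : Fin ℓ, (1 : ℂ) - a * (x k / xl) ≠ 0) :
    ∀ i j : Fin ℓ → ℕ,
      ∑ y ∈ Finset.Icc j i, MA ℓ q a x xl i y * MAstar ℓ q a x xl y j =
        ∏ k, (if i k = j k then (1 : ℂ) else 0) := by
  intro i j
  have h_inj := node_injective hq hx hd1
  have h_left (j i : Fin ℓ → ℕ) (hji : j ≤ i) :
      ∑ y ∈ Icc j i, MAstar ℓ q a x xl i y * MA ℓ q a x xl y j = if i = j then 1 else 0 := by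
    obtain rfl | hlt := hji.eq_or_lt
    · rw [Icc_self, sum_singleton, MAstar_self_mul_MA_self hq j (hd2 j j fun _ ↦ le_rfl) hd3,
        if_pos rfl]
    · rw [sum_MAstar_mul_MA_eq_zero hq hx h_inj hlt fun y hjy ↦ hd2 y j hjy, if_neg hlt.ne']
  rw [sum_Icc_mul_eq_ite_of_swap h_left j i, Fintype.prod_ite_zero, prod_const_one]
  congr! 1
  exact funext_iff
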